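/- Assume the potential outcomes setup and suppose X is c-dependent with Y_x for a given x ∈ {0,1} and c ∈ [0,1]. Then for every y ∈ [y̲_x, ȳ_x), P(Y_x ≤ y) ≥ max{ p_x F_{Y|X}(y|x)/(p_x + c), ((p_x F_{Y|X}(y|x) − c)/(p_x − c))·1(p_x > c), p_x F_{Y|X}(y|x) }. -/

import Mathlib

open MeasureTheory Set

noncomputable section

/-- `X` is `c`-dependent with the real random variable `V`. -/
def CDep {Ω : Type*} [MeasurableSpace Ω] (P : Measure Ω) (X : Ω → ℕ) (V : Ω → ℝ)
    (c : ℝ) : Prop :=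
  ∃ g : ℝ → ℝ, Measurable g ∧ (∀ v, 0 ≤ g v ∧ g v ≤ 1) ∧
    (∀ A : Set ℝ, MeasurableSet A →
      (P ({ω | X ω = 1} ∩ V ⁻¹' A)).toReal = ∫ v in A, g v ∂(Measure.map V P)) ∧
    (∀ᵐ v ∂(Measure.map V P), |g v - (P {ω | X ω = 1}).toReal| ≤ c)

/-- `P(X = x)`. -/
def px {Ω : Type*} [MeasurableSpace Ω] (P : Measure Ω) (X : Ω → ℕ) (x : ℕ) : ℝ :=
  (P {ω | X ω = x}).toReal

/-- The conditional cdf `y ↦ P(V ≤ y ∣ X = x)`. -/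
def condCDF' {Ω : Type*} [MeasurableSpace Ω] (P : Measure Ω) (X : Ω → ℕ) (V : Ω → ℝ)
    (x : ℕ) (y : ℝ) : ℝ :=
  (P ({ω | V ω ≤ y} ∩ {ω | X ω = x})).toReal / (P {ω | X ω = x}).toReal

/-!
Let `E = {X = x}`, `B = {Y_x ≤ y}` and `δ = P(E ∩ B) - P(E) P(B)`. Integrating the deviation of
the propensity score from `p_1` over a `Y_x`-event gives `|δ| ≤ c P(B)`, for `x = 1` directly and
for `x = 0` because complementing an event only flips the sign of `δ`. Complementing `B` as well
gives `|δ| ≤ c (1 - P(B))`. Since `P(E ∩ B) = p_x F_{Y|X}(y|x)`, solving the upper bounds on `δ`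
for `P(B)` gives the first two terms of the maximum, and `E ∩ B ⊆ B` gives the third.
-/

section EventCov

variable {Ω : Type*} [MeasurableSpace Ω] {P : Measure Ω} {E B : Set Ω} {c : ℝ}

/-- The covariance `P(E ∩ B) - P(E) P(B)` of the indicators of two events, defined for arbitrary
sets. It measures how far the events are from being independent. -/
def eventCov (P : Measure Ω) (E B : Set Ω) : ℝ :=
  P.real (E ∩ B) - P.real E * P.real B

theorem eventCov_comm (P : Measure Ω) (E B : Set Ω) : eventCov P E B = eventCov P B E := by
  rw [eventCov, eventCov, inter_comm, mul_comm]

theorem eventCov_compl_right [IsProbabilityMeasure P] (hB : NullMeasurableSet B P) :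
    eventCov P E Bᶜ = -eventCov P E B := by
  have hsplit : P.real (E ∩ B) + P.real (E ∩ Bᶜ) = P.real E :=
    measureReal_inter_add_sdiff₀ hB
  rw [eventCov, eventCov, probReal_compl_eq_one_sub₀ hB]
  linear_combination hsplit

theorem eventCov_compl_left [IsProbabilityMeasure P] (hE : NullMeasurableSet E P) :
    eventCov P Eᶜ B = -eventCov P E B := by
  rw [eventCov_comm, eventCov_compl_right hE, eventCov_comm]

theorem measureReal_inter_div_le_of_eventCov_le (hc : 0 < P.real E + c)
    (hcov : eventCov P E B ≤ c * P.real B) :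
    P.real (E ∩ B) / (P.real E + c) ≤ P.real B := by
  rw [eventCov] at hcov
  rw [div_le_iff₀ hc]
  linarith

theorem measureReal_inter_sub_div_le_of_eventCov_le (hc : c < P.real E)
    (hcov : eventCov P E B ≤ c * (1 - P.real B)) :
    (P.real (E ∩ B) - c) / (P.real E - c) ≤ P.real B := by
  rw [eventCov] at hcov
  rw [div_le_iff₀ (sub_pos.2 hc)]
  linarith

end EventCov

theorem setOf_eq_zero_eq_compl_setOf_eq_one {Ω : Type*} {X : Ω → ℕ}
    (hX01 : ∀ ω, X ω ≤ 1) :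
    {ω | X ω = 0} = {ω | X ω = 1}ᶜ := by
  ext ω
  have := hX01 ω
  simp only [mem_ofPred_eq, mem_compl_iff]
  lia

section CDependence

variable {Ω : Type*} [MeasurableSpace Ω] {P : Measure Ω} {X : Ω → ℕ} {V : Ω → ℝ}
  {x : ℕ} {c : ℝ} {A : Set ℝ}

theorem CDep.abs_eventCov_one_le [IsFiniteMeasure P] (h : CDep P X V c)
    (hV : AEMeasurable V P) (hA : MeasurableSet A) :
    |eventCov P {ω | X ω = 1} (V ⁻¹' A)| ≤ c * P.real (V ⁻¹' A) := by
  obtain ⟨g, hg, hg01, hPg, hgc⟩ := h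
  have hg_int : Integrable g (P.map V) :=
    .of_bound hg.aestronglyMeasurable 1 <| .of_forall fun v ↦ by
      rw [Real.norm_of_nonneg (hg01 v).1]
      exact (hg01 v).2
  have hcov : eventCov P {ω | X ω = 1} (V ⁻¹' A) =
      ∫ v in A, (g v - P.real {ω | X ω = 1}) ∂(P.map V) := by
    rw [integral_sub hg_int.integrableOn (integrable_const _), ← hPg A hA, setIntegral_const,
      map_measureReal_apply_of_aemeasurable hV hA, smul_eq_mul, mul_comm]
    rfl
  have hgc_norm : ∀ᵐ v ∂(P.map V), ‖g v - P.real {ω | X ω = 1}‖ ≤ c := hgc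
  rw [hcov, ← map_measureReal_apply_of_aemeasurable hV hA]
  exact norm_setIntegral_le_of_norm_le_const_ae (measure_lt_top _ _) (ae_restrict_of_ae hgc_norm)

variable [IsProbabilityMeasure P]

theorem CDep.nonneg (h : CDep P X V c) (hV : AEMeasurable V P) : 0 ≤ c := by
  simpa [eventCov] using h.abs_eventCov_one_le hV .univ

theorem px_pos_of_px_one_mem_Ioo (hX : AEMeasurable X P) (hX01 : ∀ ω, X ω ≤ 1)
    (hp1 : px P X 1 ∈ Ioo 0 1) (hx : x ≤ 1) : 0 < px P X x := by
  have hE : NullMeasurableSet {ω | X ω = 1} P :=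
    hX.nullMeasurableSet_preimage (measurableSet_singleton 1)
  obtain rfl | rfl := Nat.le_one_iff_eq_zero_or_eq_one.1 hx
  · have hp0 : px P X 0 = 1 - px P X 1 := by
      rw [px, setOf_eq_zero_eq_compl_setOf_eq_one hX01]
      exact probReal_compl_eq_one_sub₀ hE
    linarith [hp1.2]
  · exact hp1.1

theorem CDep.abs_eventCov_le (h : CDep P X V c) (hX : AEMeasurable X P)
    (hX01 : ∀ ω, X ω ≤ 1) (hV : AEMeasurable V P) (hx : x ≤ 1) (hA : MeasurableSet A) :
    |eventCov P {ω | X ω = x} (V ⁻¹' A)| ≤ c * P.real (V ⁻¹' A) := by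
  have hE : NullMeasurableSet {ω | X ω = 1} P :=
    hX.nullMeasurableSet_preimage (measurableSet_singleton 1)
  obtain rfl | rfl := Nat.le_one_iff_eq_zero_or_eq_one.1 hx
  · rw [setOf_eq_zero_eq_compl_setOf_eq_one hX01, eventCov_compl_left hE, abs_neg]
    exact h.abs_eventCov_one_le hV hA
  · exact h.abs_eventCov_one_le hV hA

theorem CDep.abs_eventCov_le_one_sub (h : CDep P X V c) (hX : AEMeasurable X P)
    (hX01 : ∀ ω, X ω ≤ 1) (hV : AEMeasurable V P) (hx : x ≤ 1) (hA : MeasurableSet A) :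
    |eventCov P {ω | X ω = x} (V ⁻¹' A)| ≤ c * (1 - P.real (V ⁻¹' A)) := by
  have hB : NullMeasurableSet (V ⁻¹' A) P := hV.nullMeasurableSet_preimage hA
  have hcompl := h.abs_eventCov_le hX hX01 hV hx hA.compl
  rwa [preimage_compl, eventCov_compl_right hB, abs_neg, probReal_compl_eq_one_sub₀ hB] at hcompl

end CDependence

section CondCDF

variable {Ω : Type*} [MeasurableSpace Ω] {P : Measure Ω} {X : Ω → ℕ} {V Y : Ω → ℝ} {x : ℕ}

theorem px_mul_condCDF' [IsFiniteMeasure P] (y : ℝ) :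
    px P X x * condCDF' P X V x y = P.real ({ω | X ω = x} ∩ V ⁻¹' Iic y) := by
  rw [inter_comm]
  exact mul_div_cancel_of_imp' fun hpx ↦ measureReal_mono_null inter_subset_right hpx

theorem condCDF'_congr (hYV : EqOn Y V {ω | X ω = x}) :
    condCDF' P X Y x = condCDF' P X V x := by
  ext y
  have hevent : {ω | Y ω ≤ y} ∩ {ω | X ω = x} = {ω | V ω ≤ y} ∩ {ω | X ω = x} := by
    ext ω
    exact and_congr_left fun hω ↦ by simp only [mem_ofPred_eq, hYV hω]
  rw [condCDF', condCDF', hevent]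

end CondCDF

theorem potential_outcome_cdf_lower_bound_general {Ω : Type*} [MeasurableSpace Ω]
    {P : Measure Ω} [IsProbabilityMeasure P] {X : Ω → ℕ} {Y V : Ω → ℝ} {x : ℕ} {c : ℝ}
    (hX : AEMeasurable X P) (hX01 : ∀ ω, X ω ≤ 1) (hV : AEMeasurable V P)
    (hYV : EqOn Y V {ω | X ω = x}) (hpx : 0 < px P X x) (hdep : CDep P X V c)
    (y : ℝ) :
    max (max
          (px P X x * condCDF' P X Y x y / (px P X x + c))
          (if c < px P X x then (px P X x * condCDF' P X Y x y - c) / (px P X x - c) else 0))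
        (px P X x * condCDF' P X Y x y) ≤
      P.real {ω | V ω ≤ y} := by
  have hx : x ≤ 1 := by
    obtain ⟨ω, hω⟩ : {ω | X ω = x}.Nonempty := nonempty_of_measureReal_ne_zero hpx.ne'
    exact hω ▸ hX01 ω
  rw [condCDF'_congr hYV, px_mul_condCDF']
  refine max_le (max_le ?_ ?_) (measureReal_mono inter_subset_right)
  · exact measureReal_inter_div_le_of_eventCov_le (add_pos_of_pos_of_nonneg hpx (hdep.nonneg hV))
      (le_of_abs_le <| hdep.abs_eventCov_le hX hX01 hV hx measurableSet_Iic)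
  · split_ifs with hc
    · exact measureReal_inter_sub_div_le_of_eventCov_le hc
        (le_of_abs_le <| hdep.abs_eventCov_le_one_sub hX hX01 hV hx measurableSet_Iic)
    · exact measureReal_nonneg

/-- Lower bound on the cdf of the potential outcome `Y_x` under `c`-dependence:
for `y ∈ [y̲_x, ȳ_x)`,
`P(Y_x ≤ y) ≥ max{ p_x F(y|x)/(p_x+c), ((p_x F(y|x)-c)/(p_x-c))1(p_x>c),
p_x F(y|x) }`. -/
theorem potential_outcome_cdf_lower_bound {Ω : Type*} [MeasurableSpace Ω]
    (P : Measure Ω) [IsProbabilityMeasure P]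
    (Yv : ℕ → Ω → ℝ) (X : Ω → ℕ) (Y : Ω → ℝ)
    (hYm : ∀ x, Measurable (Yv x)) (hXm : Measurable X)
    (hX01 : ∀ ω, X ω ≤ 1)
    (hY : ∀ ω, Y ω = Yv (X ω) ω)
    (hp1 : px P X 1 ∈ Set.Ioo (0:ℝ) 1)
    (lo hi : ℕ → EReal) (hlh : ∀ x ≤ 1, lo x < hi x)
    (hcont : ∀ x ≤ 1, ∀ x' ≤ 1, Continuous (condCDF' P X (Yv x) x'))
    (hmono : ∀ x ≤ 1, ∀ x' ≤ 1, StrictMonoOn (condCDF' P X (Yv x) x')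
      {y : ℝ | lo x ≤ (y : EReal) ∧ (y : EReal) ≤ hi x})
    (hsupp : ∀ x ≤ 1, ∀ x' ≤ 1, ∀ y : ℝ,
      ((y : EReal) ≤ lo x → condCDF' P X (Yv x) x' y = 0) ∧
      (hi x ≤ (y : EReal) → condCDF' P X (Yv x) x' y = 1))
    (x : ℕ) (hx : x ≤ 1) (c : ℝ) (hc : c ∈ Set.Icc (0:ℝ) 1)
    (hdep : CDep P X (Yv x) c) :
    ∀ y : ℝ, lo x ≤ (y : EReal) → (y : EReal) < hi x →
      max (max
            (px P X x * condCDF' P X Y x y / (px P X x + c))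
            (if c < px P X x then (px P X x * condCDF' P X Y x y - c) / (px P X x - c)
              else 0))
          (px P X x * condCDF' P X Y x y) ≤
        (P {ω | Yv x ω ≤ y}).toReal := by
  have hpx : 0 < px P X x := px_pos_of_px_one_mem_Ioo hXm.aemeasurable hX01 hp1 hx
  exact fun y _ _ ↦ potential_outcome_cdf_lower_bound_general hXm.aemeasurable hX01
    (hYm x).aemeasurable (fun ω hω ↦ by rw [hY, hω]) hpx hdep y
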